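/- arXiv:1911.05271 — 8 statements merged into one kernel-verified Lean document; each statement's English description precedes it below -/
import Mathlib

section
/- Let W : ℝ × ℝ × ℝ → ℝ (welfare as a function of employment n, unemployment u, vacancies v) be differentiable at the point (1 - u*, u*, v(u*)), with partial derivatives Wₙ, Wᵤ, Wᵥ there satisfying Wₙ > 0 and Wᵥ ≠ 0, and let v : ℝ → ℝ be differentiable at u*. If u* is a local maximum of the function u ↦ W(1 - u, u, v(u)), then v'(u*) = -(1 - ζ)/κ, where ζ = Wᵤ/Wₙ and κ = -Wᵥ/Wₙ are evaluated at (1 - u*, u*, v(u*)). -/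
/-!
The curve `u ↦ (1 - u, u, v u)` has velocity `(-1, 1, v'(u*))` at `u*`. By the chain rule and
Fermat's theorem, the derivative of `W` vanishes on this vector (the Beveridge curve is tangent to
an isowelfare surface), i.e. `-Wn + Wu + v'(u*) * Wv = 0`. Since `Wn` and `Wv` are nonzero,
this can be solved for `v'(u*)`.
-/

/-- Proposition 1 (tangency condition): if the social planner's objective
`u ↦ W(1-u, u, v(u))` has a local maximum at `u*`, then the slope of the
Beveridge curve there equals `-(1-ζ)/κ`, where `ζ = Wᵤ/Wₙ` is the social value
of nonwork and `κ = -Wᵥ/Wₙ` the recruiting cost. -/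
theorem stmt_0 (W : ℝ × ℝ × ℝ → ℝ) (v : ℝ → ℝ) (ustar : ℝ)
    (hW : DifferentiableAt ℝ W (1 - ustar, ustar, v ustar))
    (Wn Wu Wv : ℝ)
    (hWn : Wn = fderiv ℝ W (1 - ustar, ustar, v ustar) (1, 0, 0))
    (hWu : Wu = fderiv ℝ W (1 - ustar, ustar, v ustar) (0, 1, 0))
    (hWv : Wv = fderiv ℝ W (1 - ustar, ustar, v ustar) (0, 0, 1))
    (hWnpos : 0 < Wn) (hWvne : Wv ≠ 0)
    (hv : DifferentiableAt ℝ v ustar)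
    (hmax : IsLocalMax (fun u => W (1 - u, u, v u)) ustar) :
    deriv v ustar = -(1 - Wu / Wn) / (-Wv / Wn) := by
  have hpath : HasDerivAt (fun u : ℝ => ((1 - u, u, v u) : ℝ × ℝ × ℝ))
      (-1, 1, deriv v ustar) ustar :=
    ((hasDerivAt_id ustar).const_sub 1).prodMk ((hasDerivAt_id ustar).prodMk hv.hasDerivAt)
  have hfoc := hmax.hasDerivAt_eq_zero (hW.hasFDerivAt.comp_hasDerivAt ustar hpath)
  have hdecomp : ((-1, 1, deriv v ustar) : ℝ × ℝ × ℝ) =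
      (-1 : ℝ) • (1, 0, 0) + (1 : ℝ) • (0, 1, 0) + deriv v ustar • (0, 0, 1) := by
    simp
  rw [hdecomp, map_add, map_add, map_smul, map_smul, map_smul, ← hWn, ← hWu, ← hWv] at hfoc
  simp only [smul_eq_mul] at hfoc
  -- The first-order condition now reads `-Wn + Wu + v'(u*) * Wv = 0`; solve it for `v'(u*)`.
  have hn : Wn ≠ 0 := hWnpos.ne'
  have hκ : -Wv / Wn ≠ 0 := div_ne_zero (neg_ne_zero.mpr hWvne) hn
  rw [eq_div_iff hκ]
  field_simp
  linarith
end

section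
/- Let v₀ > 0, ε > 0, κ > 0, ζ < 1, and let the Beveridge curve be isoelastic: v(u) = v₀·u^(−ε) for u > 0. Suppose u* > 0 satisfies the efficiency condition v(u*)/u* = (1-ζ)/(κε). Then for every u > 0, u* = ((κ·ε/(1-ζ))·(v(u)/u))^(1/(1+ε)) · u. -/
/-- Proposition 3 (sufficient-statistic formula): on an isoelastic Beveridge
curve `v(u) = v₀·u^(-ε)`, if `u*` satisfies the efficiency condition
`v(u*)/u* = (1-ζ)/(κε)`, then for every `u > 0`,
`u* = ((κε/(1-ζ))·(v(u)/u))^(1/(1+ε)) · u`. -/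
theorem stmt_2 (v₀ ε κ ζ : ℝ) (hv₀ : 0 < v₀) (hε : 0 < ε) (hκ : 0 < κ) (hζ : ζ < 1)
    (v : ℝ → ℝ) (hv : ∀ u > 0, v u = v₀ * u ^ (-ε))
    (ustar : ℝ) (hustar : 0 < ustar)
    (heff : v ustar / ustar = (1 - ζ) / (κ * ε)) :
    ∀ u > 0, ustar = (κ * ε / (1 - ζ) * (v u / u)) ^ ((1 : ℝ) / (1 + ε)) * u := by
  intro u hu
  -- The efficiency condition turns `κε/(1-ζ)` into `u*/v(u*)`, so `v₀` cancels.
  have key : κ * ε / (1 - ζ) * (v u / u) = (ustar / u) ^ (1 + ε) := by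
    rw [← inv_div, ← heff, hv u hu, hv ustar hustar, Real.div_rpow hustar.le hu.le,
      Real.rpow_add hustar, Real.rpow_add hu, Real.rpow_one, Real.rpow_one,
      Real.rpow_neg hu.le, Real.rpow_neg hustar.le]
    have h1 := Real.rpow_pos_of_pos hu ε
    have h2 := Real.rpow_pos_of_pos hustar ε
    field_simp
  rw [key, one_div, Real.rpow_rpow_inv (div_pos hustar hu).le (by positivity),
    div_mul_cancel₀ _ hu.ne']
end

section
/- Let s > 0, μ > 0, α ∈ (0,1), and define v(u) = (s·(1-u)/(μ·u^α))^(1/(1-α)) for u ∈ (0,1). Then v is differentiable on (0,1) and its Beveridge elasticity satisfies −u·v'(u)/v(u) = (1/(1-α))·(α + u/(1-u)) for every u ∈ (0,1). -/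
/-!
The elasticity is `-d log v / d log u`. On `(0,1)` all factors are positive, so
`log v(u) = (log s + log (1 - u) - log μ - α log u) / (1 - α)`, and differentiating this
gives `v'(u) / v(u) = -(1 / (1 - u) + α / u) / (1 - α)`. Since `v` is only prescribed on the open
interval, the derivative is transferred from the exponential of this expression by
local equality.
-/

/-- In the DMP model, the Beveridge curve `v(u) = (s·(1-u)/(μ·u^α))^(1/(1-α))`
is differentiable on `(0,1)` and its Beveridge elasticity is
`-u·v'(u)/v(u) = (1/(1-α))·(α + u/(1-u))`. -/
theorem stmt_5 (s μ α : ℝ) (hs : 0 < s) (hμ : 0 < μ) (hα : α ∈ Set.Ioo (0 : ℝ) 1)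
    (v : ℝ → ℝ)
    (hv : ∀ u ∈ Set.Ioo (0 : ℝ) 1,
      v u = (s * (1 - u) / (μ * u ^ α)) ^ ((1 : ℝ) / (1 - α))) :
    ∀ u ∈ Set.Ioo (0 : ℝ) 1, DifferentiableAt ℝ v u ∧
      -(u * deriv v u) / v u = (1 / (1 - α)) * (α + u / (1 - u)) := by
  intro u hu
  have heq : v =ᶠ[nhds u] fun x => Real.exp
      ((Real.log s + Real.log (1 - x) - (Real.log μ + α * Real.log x)) * (1 / (1 - α))) := by
    filter_upwards [Ioo_mem_nhds hu.1 hu.2] with x hx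
    have h1 : 0 < 1 - x := sub_pos.2 hx.2
    have h2 : 0 < x ^ α := Real.rpow_pos_of_pos hx.1 α
    rw [hv x hx, Real.rpow_def_of_pos (by positivity),
      Real.log_div (by positivity) (by positivity), Real.log_mul hs.ne' h1.ne',
      Real.log_mul hμ.ne' h2.ne', Real.log_rpow hx.1]
  have hu0 : u ≠ 0 := hu.1.ne'
  have hu1 : 1 - u ≠ 0 := (sub_pos.2 hu.2).ne'
  have ha1 : 1 - α ≠ 0 := (sub_pos.2 hα.2).ne'
  have hd := (((((((hasDerivAt_id' u).const_sub 1).log hu1).const_add (Real.log s)).sub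
    (((Real.hasDerivAt_log hu0).const_mul α).const_add (Real.log μ))).mul_const
    (1 / (1 - α))).exp).congr_of_eventuallyEq heq
  refine ⟨hd.differentiableAt, ?_⟩
  rw [hd.deriv, heq.eq_of_nhds]
  simp only [Pi.sub_apply]
  generalize hE : Real.exp _ = E
  have hE0 : E ≠ 0 := hE ▸ Real.exp_ne_zero _
  field_simp
  ring
end

section
/- Let v₀ > 0, ε > 0, κ > 0, ζ < 1, and define welfare along the isoelastic Beveridge curve by f(u) = −(1-ζ)·u − κ·v₀·u^(−ε) for u > 0. Then f attains a unique global maximum on (0,∞), at the point u* = (κ·ε·v₀/(1-ζ))^(1/(1+ε)); that is, f(u) < f(u*) for every u > 0 with u ≠ u*. -/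
/-!
The first-order condition at `u*` reads `(1-ζ)·u* = κ·v₀·ε·u*^(-ε)`. Writing `u = u*·t`, it turns
welfare into `f(u) = -κ·v₀·u*^(-ε) · (t^(-ε) + ε·t)`, so the claim reduces to the strict Bernoulli
inequality `1 + ε < t^(-ε) + ε·t` for positive `t ≠ 1`.
-/

/-- Both tangent-line bounds `x + 1 < exp x`, at `x = -ε log t` and at `x = log t` (the latter
weighted by `ε`), are strict, and the logarithms cancel in their sum. -/
lemma one_add_lt_rpow_neg_add_mul {ε t : ℝ} (hε : 0 < ε) (ht : 0 < t) (ht1 : t ≠ 1) :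
    1 + ε < t ^ (-ε) + ε * t := by
  have hL : Real.log t ≠ 0 := Real.log_ne_zero_of_pos_of_ne_one ht ht1
  have h1 : Real.log t * (-ε) + 1 < t ^ (-ε) := by
    rw [Real.rpow_def_of_pos ht]
    exact Real.add_one_lt_exp (mul_ne_zero hL (neg_ne_zero.mpr hε.ne'))
  have h2 : Real.log t + 1 < t := by
    simpa [Real.exp_log ht] using Real.add_one_lt_exp hL
  nlinarith [mul_lt_mul_of_pos_left h2 hε]

/-- Welfare along the isoelastic Beveridge curve, `f(u) = -(1-ζ)·u - κ·v₀·u^(-ε)`,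
attains a unique global maximum on `(0,∞)` at `u* = (κεv₀/(1-ζ))^(1/(1+ε))`. -/
theorem stmt_6 (v₀ ε κ ζ : ℝ) (hv₀ : 0 < v₀) (hε : 0 < ε) (hκ : 0 < κ) (hζ : ζ < 1)
    (f : ℝ → ℝ) (hf : ∀ u > 0, f u = -(1 - ζ) * u - κ * v₀ * u ^ (-ε))
    (ustar : ℝ) (hustar : ustar = (κ * ε * v₀ / (1 - ζ)) ^ ((1 : ℝ) / (1 + ε))) :
    ∀ u > 0, u ≠ ustar → f u < f ustar := by
  intro u hu hne
  have hA : 0 < 1 - ζ := sub_pos.mpr hζ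
  have hq : 0 < κ * ε * v₀ / (1 - ζ) := by positivity
  have hs : 0 < ustar := hustar ▸ Real.rpow_pos_of_pos hq _
  have hpow : ustar ^ (1 + ε) = κ * ε * v₀ / (1 - ζ) := by
    rw [hustar, ← Real.rpow_mul hq.le, one_div_mul_cancel (by positivity), Real.rpow_one]
  have hfoc : (1 - ζ) * ustar = κ * v₀ * ε * ustar ^ (-ε) := by
    have h : ustar ^ (1 + ε) * ustar ^ (-ε) = ustar := by
      rw [← Real.rpow_add hs, add_neg_cancel_right, Real.rpow_one]
    rw [hpow] at h
    calc (1 - ζ) * ustar = (1 - ζ) * (κ * ε * v₀ / (1 - ζ) * ustar ^ (-ε)) := by rw [h]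
      _ = κ * v₀ * ε * ustar ^ (-ε) := by field_simp
  obtain ⟨t, rfl⟩ : ∃ t, u = ustar * t := ⟨u / ustar, by field_simp⟩
  have ht : 0 < t := pos_of_mul_pos_right hu hs.le
  have ht1 : t ≠ 1 := by
    rintro rfl
    exact hne (mul_one _)
  have hC : 0 < κ * v₀ * ustar ^ (-ε) := by positivity
  rw [hf _ hu, hf _ hs, Real.mul_rpow hs.le ht.le]
  linear_combination (κ * v₀ * ustar ^ (-ε)) * one_add_lt_rpow_neg_add_mul hε ht ht1
    + (1 - t) * hfoc
end

section
/- Let v₀ > 0, ε > 0, κ > 0, ζ < 1, define tightness along the isoelastic Beveridge curve by θ(u) = v₀·u^(−(1+ε)) for u > 0, and let θ* = (1-ζ)/(κε) and u* = (κ·ε·v₀/(1-ζ))^(1/(1+ε)). Then θ is strictly decreasing on (0,∞), θ(u*) = θ*, and for every u > 0: θ(u) > θ* if and only if u < u*, and θ(u) < θ* if and only if u > u*. -/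
/-- Proposition 2 on the isoelastic Beveridge curve: tightness
`θ(u) = v₀·u^(-(1+ε))` is strictly decreasing, equals the efficient tightness
`θ* = (1-ζ)/(κε)` at `u* = (κεv₀/(1-ζ))^(1/(1+ε))`, and is above (below) `θ*`
exactly when `u` is below (above) `u*`. -/
theorem stmt_8 (v₀ ε κ ζ : ℝ) (hv₀ : 0 < v₀) (hε : 0 < ε) (hκ : 0 < κ) (hζ : ζ < 1)
    (θ : ℝ → ℝ) (hθ : ∀ u > 0, θ u = v₀ * u ^ (-(1 + ε)))
    (θstar ustar : ℝ) (hθstar : θstar = (1 - ζ) / (κ * ε))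
    (hustar : ustar = (κ * ε * v₀ / (1 - ζ)) ^ ((1 : ℝ) / (1 + ε))) :
    StrictAntiOn θ (Set.Ioi 0) ∧ θ ustar = θstar ∧
      ∀ u > 0, (θ u > θstar ↔ u < ustar) ∧ (θ u < θstar ↔ u > ustar) := by
  have hζ' : 0 < 1 - ζ := sub_pos.2 hζ
  have hbase : 0 < κ * ε * v₀ / (1 - ζ) := by positivity
  have hu : 0 < ustar := hustar ▸ Real.rpow_pos_of_pos hbase _
  have hanti : StrictAntiOn θ (Set.Ioi 0) := by
    intro a ha b hb hab
    rw [hθ a ha, hθ b hb]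
    exact mul_lt_mul_of_pos_left (Real.rpow_lt_rpow_of_neg ha hab (by linarith)) hv₀
  have heq : θ ustar = θstar := by
    have hpow : ustar ^ (1 + ε) = κ * ε * v₀ / (1 - ζ) := by
      rw [hustar, one_div, Real.rpow_inv_rpow hbase.le (by positivity)]
    rw [hθ ustar hu, Real.rpow_neg hu.le, hpow, hθstar]
    field_simp
  -- Both equivalences compare `θ u` with `θ ustar` and use strict antitonicity.
  refine ⟨hanti, heq, fun u hu0 => ⟨?_, ?_⟩⟩
  · rw [← heq]
    exact hanti.lt_iff_gt hu hu0
  · rw [← heq]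
    exact hanti.lt_iff_gt hu0 hu
end

section
/- Fix v₀ > 0, ε > 0, ζ < 1. Then the efficient unemployment rate u*(κ) = (κ·ε·v₀/(1-ζ))^(1/(1+ε)) is strictly increasing in κ on (0,∞), and the efficient tightness θ*(κ) = (1-ζ)/(κε) is strictly decreasing in κ on (0,∞). -/
/-- Proposition 4 (first comparative static): the efficient unemployment rate
`u*(κ) = (κεv₀/(1-ζ))^(1/(1+ε))` is strictly increasing in the recruiting cost
`κ`, and the efficient tightness `θ*(κ) = (1-ζ)/(κε)` is strictly decreasing. -/
theorem stmt_9 (v₀ ε ζ : ℝ) (hv₀ : 0 < v₀) (hε : 0 < ε) (hζ : ζ < 1) :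
    StrictMonoOn (fun κ : ℝ => (κ * ε * v₀ / (1 - ζ)) ^ ((1 : ℝ) / (1 + ε)))
      (Set.Ioi 0) ∧
    StrictAntiOn (fun κ : ℝ => (1 - ζ) / (κ * ε)) (Set.Ioi 0) := by
  have hz : 0 < 1 - ζ := sub_pos.2 hζ
  constructor
  · intro a ha b _ hab
    have ha' : 0 < a := ha
    exact Real.rpow_lt_rpow (by positivity) (by gcongr) (by positivity)
  · intro a ha b _ hab
    have ha' : 0 < a := ha
    exact div_lt_div_of_pos_left hz (by positivity) (by gcongr)
end

section
/- Fix v₀ > 0, ε > 0, κ > 0. Then the efficient unemployment rate u*(ζ) = (κ·ε·v₀/(1-ζ))^(1/(1+ε)) is strictly increasing in ζ on (-∞, 1), and the efficient tightness θ*(ζ) = (1-ζ)/(κε) is strictly decreasing in ζ on (-∞, 1). -/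
/-- Proposition 4 (second comparative static): the efficient unemployment rate
`u*(ζ) = (κεv₀/(1-ζ))^(1/(1+ε))` is strictly increasing in the social value of
nonwork `ζ` on `(-∞,1)`, and the efficient tightness `θ*(ζ) = (1-ζ)/(κε)` is
strictly decreasing there. -/
theorem stmt_10 (v₀ ε κ : ℝ) (hv₀ : 0 < v₀) (hε : 0 < ε) (hκ : 0 < κ) :
    StrictMonoOn (fun ζ : ℝ => (κ * ε * v₀ / (1 - ζ)) ^ ((1 : ℝ) / (1 + ε)))
      (Set.Iio 1) ∧
    StrictAntiOn (fun ζ : ℝ => (1 - ζ) / (κ * ε)) (Set.Iio 1) := by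
  have hc : 0 < κ * ε * v₀ := by positivity
  constructor
  · intro a ha b hb hab
    have hb' : 0 < 1 - b := sub_pos.mpr hb
    have ha' : 0 < 1 - a := sub_pos.mpr ha
    -- The base is positive on `(-∞, 1)`, where `x ↦ x ^ p` with `p > 0` is strictly increasing.
    exact Real.rpow_lt_rpow (div_pos hc ha').le
      (div_lt_div_of_pos_left hc hb' (by linarith)) (by positivity)
  · intro a _ b _ hab
    exact div_lt_div_of_pos_right (by linarith) (mul_pos hκ hε)
end

section
/- Let κ > 0, ζ < 1, and 0 < ε < ε'. Let v₀ > 0 and v₀' > 0 be such that the efficient points (u*, v*) and (u*', v*') of the Beveridge curves v₀·u^(−ε) and v₀'·u^(−ε') lie on the same isowelfare line, i.e., (1-ζ)·u* + κ·v* = (1-ζ)·u*' + κ·v*', where u* = (κ·ε·v₀/(1-ζ))^(1/(1+ε)), v* = v₀·(u*)^(−ε), and similarly for the primed quantities. Then u*' > u* and the efficient tightness falls: (1-ζ)/(κε') < (1-ζ)/(κε). Equivalently, with C = (1-ζ)·u* + κ·v* > 0, one has u* = C·ε/((1-ζ)·(1+ε)), which is strictly increasing in ε. -/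
/-!
At the efficient point the first-order condition `κ ε v* = (1 - ζ) u*` holds, since
`(u*) ^ (1 + ε) = κ ε v₀ / (1 - ζ)`. Hence the social cost `C = (1 - ζ) u* + κ v*` satisfies
`C ε = (1 - ζ) (1 + ε) u*`, that is, `u* = C / (1 - ζ) * (ε / (1 + ε))`. On a fixed isowelfare
line `C` is constant, and `e ↦ e / (1 + e)` is strictly increasing on the positive reals.
-/

/-- Positivity of efficient unemployment, and its expression through the elasticity and the level
`(1 - ζ) u + κ v` of the isowelfare line through the efficient point. -/
lemma efficient_point {κ ζ ε v₀ u v : ℝ} (hκ : 0 < κ) (hζ : ζ < 1) (hε : 0 < ε) (hv₀ : 0 < v₀)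
    (hu : u = (κ * ε * v₀ / (1 - ζ)) ^ ((1 : ℝ) / (1 + ε))) (hv : v = v₀ * u ^ (-ε)) :
    0 < u ∧ 0 < v ∧ u = ((1 - ζ) * u + κ * v) * ε / ((1 - ζ) * (1 + ε)) := by
  have hz : 0 < 1 - ζ := by linarith
  have hb : 0 < κ * ε * v₀ / (1 - ζ) := by positivity
  have hu0 : 0 < u := hu ▸ Real.rpow_pos_of_pos hb _
  have hv0 : 0 < v := hv ▸ mul_pos hv₀ (Real.rpow_pos_of_pos hu0 _)
  have hpow : u ^ (1 + ε) = κ * ε * v₀ / (1 - ζ) := by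
    rw [hu, ← Real.rpow_mul hb.le, one_div_mul_cancel (by positivity), Real.rpow_one]
  have hmul : u ^ (1 + ε) * u ^ (-ε) = u := by
    rw [← Real.rpow_add hu0, add_neg_cancel_right, Real.rpow_one]
  have hfoc : κ * ε * v = (1 - ζ) * u := by
    calc κ * ε * v = (1 - ζ) * (κ * ε * v₀ / (1 - ζ) * u ^ (-ε)) := by
          rw [hv]; field_simp
      _ = (1 - ζ) * u := by rw [← hpow, hmul]
  refine ⟨hu0, hv0, ?_⟩
  rw [eq_div_iff (by positivity)]
  linear_combination -hfoc

lemma strictMonoOn_efficient_unemployment {ζ C : ℝ} (hζ : ζ < 1) (hC : 0 < C) :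
    StrictMonoOn (fun e : ℝ => C * e / ((1 - ζ) * (1 + e))) (Set.Ioi 0) := by
  intro a ha b hb hab
  have ha : 0 < a := ha
  have hb : 0 < b := hb
  have hz : 0 < 1 - ζ := by linarith
  change C * a / ((1 - ζ) * (1 + a)) < C * b / ((1 - ζ) * (1 + b))
  rw [div_lt_div_iff₀ (by positivity) (by positivity)]
  have h : 0 < C * (1 - ζ) * (b - a) := mul_pos (mul_pos hC hz) (by linarith)
  linarith

/-- Proposition 4 (third comparative static): a compensated increase in the
Beveridge elasticity (an increase `ε < ε'` with `v₀` adjusted so the efficient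
points lie on the same isowelfare line `(1-ζ)·u + κ·v = C`) raises the efficient
unemployment rate and lowers the efficient tightness; equivalently, `C > 0` and
`u* = C·ε/((1-ζ)·(1+ε))`, which is strictly increasing in `ε`. -/
theorem stmt_11 (κ ζ ε ε' v₀ v₀' : ℝ) (hκ : 0 < κ) (hζ : ζ < 1)
    (hε : 0 < ε) (hεε' : ε < ε') (hv₀ : 0 < v₀) (hv₀' : 0 < v₀')
    (ustar vstar ustar' vstar' : ℝ)
    (hu : ustar = (κ * ε * v₀ / (1 - ζ)) ^ ((1 : ℝ) / (1 + ε)))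
    (hvs : vstar = v₀ * ustar ^ (-ε))
    (hu' : ustar' = (κ * ε' * v₀' / (1 - ζ)) ^ ((1 : ℝ) / (1 + ε')))
    (hvs' : vstar' = v₀' * ustar' ^ (-ε'))
    (hiso : (1 - ζ) * ustar + κ * vstar = (1 - ζ) * ustar' + κ * vstar') :
    ustar < ustar' ∧ (1 - ζ) / (κ * ε') < (1 - ζ) / (κ * ε) ∧
      0 < (1 - ζ) * ustar + κ * vstar ∧
      ustar = ((1 - ζ) * ustar + κ * vstar) * ε / ((1 - ζ) * (1 + ε)) ∧
      StrictMonoOn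
        (fun e : ℝ => ((1 - ζ) * ustar + κ * vstar) * e / ((1 - ζ) * (1 + e)))
        (Set.Ioi 0) := by
  have hz : 0 < 1 - ζ := by linarith
  have hε' : 0 < ε' := hε.trans hεε'
  obtain ⟨hpos, hvpos, hform⟩ := efficient_point hκ hζ hε hv₀ hu hvs
  obtain ⟨-, -, hform'⟩ := efficient_point hκ hζ hε' hv₀' hu' hvs'
  have hC : 0 < (1 - ζ) * ustar + κ * vstar := by positivity
  have hmono := strictMonoOn_efficient_unemployment hζ hC
  refine ⟨?_, ?_, hC, hform, hmono⟩
  · rw [← hiso] at hform'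
    exact hform.trans_lt ((hmono hε hε' hεε').trans_eq hform'.symm)
  · exact div_lt_div_of_pos_left hz (by positivity) (mul_lt_mul_of_pos_left hεε' hκ)
end
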